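/- arXiv:2304.10822 — 6 statements merged into one kernel-verified Lean document; each statement's English description precedes it below -/
import Mathlib

section
/- For every natural number k and every integer n, there exists a unique ψ ∈ (nπ − π/2, nπ + π/2) such that cos(ψ)^(2k) + tan(ψ) = 0. -/
open Real

/-!
Where `cos ψ ≠ 0` we have `cos ψ ^ 2 = (1 + tan ψ ^ 2)⁻¹`, so `c * cos ψ ^ (2k) + tan ψ = 0` says
exactly that `t = tan ψ` solves `t * (1 + t ^ 2) ^ k = -c`. The left-hand side is a strictly
increasing function of `t` onto `ℝ`, and `tan` maps each interval `(nπ - π/2, nπ + π/2)`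
bijectively onto `ℝ`.
-/

section OrderedRing

variable {R : Type*} [CommRing R] [LinearOrder R] [IsStrictOrderedRing R]

lemma strictMono_mul_one_add_sq_pow (k : ℕ) :
    StrictMono fun t : R ↦ t * (1 + t ^ 2) ^ k := by
  refine strictMono_of_odd_strictMonoOn_nonneg (fun t ↦ by rw [neg_sq, neg_mul]) ?_
  intro s (hs : 0 ≤ s) t _ hst
  have hpow : (1 + s ^ 2) ^ k ≤ (1 + t ^ 2) ^ k := by gcongr
  exact mul_lt_mul hst hpow (by positivity) (hs.trans hst.le)

lemma le_mul_one_add_sq_pow (k : ℕ) {t : R} (ht : 0 ≤ t) : t ≤ t * (1 + t ^ 2) ^ k :=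
  le_mul_of_one_le_right ht (one_le_pow₀ (le_add_of_nonneg_right (sq_nonneg t)))

end OrderedRing

lemma surjective_mul_one_add_sq_pow (k : ℕ) :
    Function.Surjective fun t : ℝ ↦ t * (1 + t ^ 2) ^ k := by
  intro c
  have hc : |c| ≤ |c| * (1 + |c| ^ 2) ^ k := le_mul_one_add_sq_pow k (abs_nonneg c)
  refine mem_range_of_exists_le_of_exists_ge (by fun_prop) ⟨-|c|, ?_⟩ ⟨|c|, ?_⟩
  · calc -|c| * (1 + (-|c|) ^ 2) ^ k = -(|c| * (1 + |c| ^ 2) ^ k) := by rw [neg_sq, neg_mul]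
      _ ≤ -|c| := neg_le_neg hc
      _ ≤ c := neg_abs_le c
  · exact (le_abs_self c).trans hc

lemma mul_cos_pow_add_tan_eq_zero_iff (c : ℝ) (k : ℕ) {ψ : ℝ} (hψ : cos ψ ≠ 0) :
    c * cos ψ ^ (2 * k) + tan ψ = 0 ↔ tan ψ * (1 + tan ψ ^ 2) ^ k = -c := by
  have hpos : 0 < (1 + tan ψ ^ 2) ^ k := by positivity
  rw [pow_mul, ← inv_one_add_tan_sq hψ, inv_pow, ← div_eq_mul_inv, add_comm,
    add_eq_zero_iff_eq_neg, ← neg_div, eq_div_iff hpos.ne']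

lemma sub_int_mul_pi_mem_Ioo_iff (n : ℤ) (ψ : ℝ) :
    ψ - n * π ∈ Set.Ioo (-(π / 2)) (π / 2) ↔
      ψ ∈ Set.Ioo (n * π - π / 2) (n * π + π / 2) := by
  rw [Set.sub_mem_Ioo_iff_left, neg_add_eq_sub, add_comm (π / 2)]

lemma cos_ne_zero_of_mem_Ioo_int_mul_pi {n : ℤ} {ψ : ℝ}
    (hψ : ψ ∈ Set.Ioo (n * π - π / 2) (n * π + π / 2)) : cos ψ ≠ 0 := by
  have hcos : 0 < cos (ψ - n * π) :=
    cos_pos_of_mem_Ioo ((sub_int_mul_pi_mem_Ioo_iff n ψ).2 hψ)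
  rw [cos_sub_int_mul_pi] at hcos
  exact right_ne_zero_of_mul hcos.ne'

lemma existsUnique_mem_Ioo_int_mul_pi_tan_eq (n : ℤ) (t : ℝ) :
    ∃! ψ : ℝ, ψ ∈ Set.Ioo (n * π - π / 2) (n * π + π / 2) ∧ tan ψ = t := by
  simp only [← sub_int_mul_pi_mem_Ioo_iff]
  refine ⟨arctan t + n * π, ⟨?_, ?_⟩, ?_⟩
  · rw [add_sub_cancel_right]
    exact arctan_mem_Ioo t
  · rw [tan_add_int_mul_pi, tan_arctan]
  · rintro ψ ⟨hψ, htan⟩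
    rw [← tan_sub_int_mul_pi ψ n] at htan
    exact sub_eq_iff_eq_add.1 (arctan_eq_of_tan_eq htan hψ).symm

theorem unique_zero_cos_pow_add_tan_shifted_general (c : ℝ) (k : ℕ) (n : ℤ) :
    ∃! ψ : ℝ, ψ ∈ Set.Ioo (n * π - π / 2) (n * π + π / 2) ∧
      c * cos ψ ^ (2 * k) + tan ψ = 0 := by
  obtain ⟨t, ht⟩ := surjective_mul_one_add_sq_pow k (-c)
  refine (existsUnique_congr fun ψ ↦ and_congr_right fun hψ ↦ ?_).2
    (existsUnique_mem_Ioo_int_mul_pi_tan_eq n t)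
  calc c * cos ψ ^ (2 * k) + tan ψ = 0
      ↔ tan ψ * (1 + tan ψ ^ 2) ^ k = -c :=
        mul_cos_pow_add_tan_eq_zero_iff c k (cos_ne_zero_of_mem_Ioo_int_mul_pi hψ)
    _ ↔ tan ψ * (1 + tan ψ ^ 2) ^ k = t * (1 + t ^ 2) ^ k := by rw [← ht]
    _ ↔ tan ψ = t := (strictMono_mul_one_add_sq_pow k).injective.eq_iff

/-- For every `k : ℕ` and every integer `n`, there is a unique
`ψ ∈ (nπ - π/2, nπ + π/2)` with `cos ψ ^ (2k) + tan ψ = 0`. -/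
theorem unique_zero_cos_pow_add_tan_shifted (k : ℕ) (n : ℤ) :
    ∃! ψ : ℝ, ψ ∈ Set.Ioo ((n : ℝ) * π - π/2) ((n : ℝ) * π + π/2) ∧
      cos ψ ^ (2*k) + tan ψ = 0 := by
  simpa only [one_mul] using unique_zero_cos_pow_add_tan_shifted_general 1 k n
end

section
/- For every natural number k, there exists a unique ψ ∈ (0, π) such that cos(ψ)^(2k+1) + sin(ψ) = 0; moreover, this unique solution lies in (π/2, π). -/
open Real

lemma strictAntiOn_sin : StrictAntiOn sin (Set.Icc (π / 2) (3 * π / 2)) := by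
  intro x hx y hy hxy
  rw [← cos_sub_pi_div_two, ← cos_sub_pi_div_two]
  exact strictAntiOn_cos ⟨by linarith [hx.1], by linarith [hx.2]⟩
    ⟨by linarith [hy.1], by linarith [hy.2]⟩ (by linarith)

lemma strictAntiOn_cos_pow_add_sin {n : ℕ} (hn : Odd n) :
    StrictAntiOn (fun x ↦ cos x ^ n + sin x) (Set.Icc (π / 2) π) := by
  have cos_pow_anti : StrictAntiOn (fun x ↦ cos x ^ n) (Set.Icc (π / 2) π) :=
    hn.strictMono_pow.comp_strictAntiOn
      (strictAntiOn_cos.mono (Set.Icc_subset_Icc_left pi_div_two_pos.le))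
  have sin_anti : StrictAntiOn sin (Set.Icc (π / 2) π) :=
    strictAntiOn_sin.mono (Set.Icc_subset_Icc_right (by linarith [pi_pos]))
  exact cos_pow_anti.add sin_anti

lemma exists_cos_pow_add_sin_eq_zero {n : ℕ} (hn : Odd n) :
    ∃ x ∈ Set.Ioo (π / 2) π, cos x ^ n + sin x = 0 := by
  have hcont : ContinuousOn (fun x ↦ cos x ^ n + sin x) (Set.Icc (π / 2) π) := by
    fun_prop
  have left_value : cos (π / 2) ^ n + sin (π / 2) = 1 := by simp [hn.pos.ne']
  have right_value : cos π ^ n + sin π = -1 := by simp [hn.neg_one_pow]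
  exact intermediate_value_Ioo' (half_le_self pi_pos.le) hcont
    ⟨by linarith, by linarith⟩

lemma cos_pow_add_sin_pos (n : ℕ) {x : ℝ} (hx : x ∈ Set.Ioc 0 (π / 2)) :
    0 < cos x ^ n + sin x := by
  have hcos : 0 ≤ cos x := cos_nonneg_of_mem_Icc ⟨by linarith [hx.1, pi_pos], hx.2⟩
  have hsin : 0 < sin x := sin_pos_of_pos_of_lt_pi hx.1 (by linarith [hx.2, pi_pos])
  positivity

/-- For every `k : ℕ` there is a unique `ψ ∈ (0, π)` with
`cos ψ ^ (2k+1) + sin ψ = 0`; moreover this unique solution lies in `(π/2, π)`. -/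
theorem unique_zero_cos_odd_pow_add_sin (k : ℕ) :
    ∃ ψ : ℝ, ψ ∈ Set.Ioo (π/2) π ∧ cos ψ ^ (2*k+1) + sin ψ = 0 ∧
      ∀ ψ' ∈ Set.Ioo 0 π, cos ψ' ^ (2*k+1) + sin ψ' = 0 → ψ' = ψ := by
  have hodd : Odd (2 * k + 1) := odd_two_mul_add_one k
  obtain ⟨ψ, hψ, hzero⟩ := exists_cos_pow_add_sin_eq_zero hodd
  refine ⟨ψ, hψ, hzero, fun ψ' hψ' hzero' ↦ ?_⟩
  have hlt : π / 2 < ψ' := by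
    by_contra! hle
    exact (cos_pow_add_sin_pos (2 * k + 1) ⟨hψ'.1, hle⟩).ne' hzero'
  exact (strictAntiOn_cos_pow_add_sin hodd).injOn ⟨hlt.le, hψ'.2.le⟩
    (Set.Ioo_subset_Icc_self hψ) (hzero'.trans hzero.symm)
end

section
/- For every natural number k, the function f_k is differentiable at ψ = 0 and at ψ = π, with derivative equal to −(2k+1) at both points. In particular both derivatives are strictly negative, so the equilibria ψ = 0 and ψ = π of ψ̇ = f_k(ψ) are hyperbolic and attracting for all k. -/
/-!
Since `f k` vanishes through its factor `sin`, its slope at a zero `ψ` of `sin` is `cos ψ` times the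
value of the remaining factor. There `cos ψ = ±1` agrees with its odd powers and `cos (2ψ) = 1`, so
this factor equals `-(2k+1) cos ψ` and the slope is `-(2k+1) cos² ψ = -(2k+1)`.
-/

open Real

/-- The desingularised blow-up dynamics on the circle for `ẋ = x^(2k+1) + ε`. -/
noncomputable def f (k : ℕ) (ψ : ℝ) : ℝ :=
  ((2*(k:ℝ)+1) * sin ψ * (cos ψ ^ (2*k+1) + sin ψ)) / ((k:ℝ) * cos (2*ψ) - (k:ℝ) - 1)

theorem hasDerivAt_mul_of_eq_zero {𝕜 A : Type*} [NontriviallyNormedField 𝕜] [NormedRing A]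
    [NormedAlgebra 𝕜 A] {g h : 𝕜 → A} {g' : A} {x : 𝕜}
    (hg : HasDerivAt g g' x) (hgx : g x = 0) (hh : ContinuousAt h x) :
    HasDerivAt (fun y ↦ g y * h y) (g' * h x) x := by
  rw [hasDerivAt_iff_tendsto_slope] at hg ⊢
  have slope_mul (y : 𝕜) : slope (fun y ↦ g y * h y) x y = slope g x y * h y := by
    simp only [slope, vsub_eq_sub, hgx, zero_mul, sub_zero, smul_mul_assoc]
  simpa only [funext slope_mul] using hg.mul (hh.tendsto.mono_left nhdsWithin_le_nhds)

theorem cos_sq_eq_one_of_sin_eq_zero {ψ : ℝ} (hψ : sin ψ = 0) : cos ψ ^ 2 = 1 := by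
  simp [cos_sq', hψ]

section FastFoliation

variable (k : ℕ)

/-- The quotient `f k ψ / sin ψ`, extended continuously through the zeros of `sin`, where its
value determines the slope of `f k`. -/
noncomputable def sinCofactor (ψ : ℝ) : ℝ :=
  (2 * k + 1) * (cos ψ ^ (2 * k + 1) + sin ψ) / (k * cos (2 * ψ) - k - 1)

theorem f_eq_sin_mul_sinCofactor : f k = fun ψ ↦ sin ψ * sinCofactor k ψ := by
  funext ψ
  unfold f sinCofactor
  ring

theorem f_denominator_neg (ψ : ℝ) : k * cos (2 * ψ) - k - 1 < 0 := by
  have : k * cos (2 * ψ) ≤ k := mul_le_of_le_one_right k.cast_nonneg (cos_le_one _)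
  linarith

theorem continuous_sinCofactor : Continuous (sinCofactor k) :=
  Continuous.div (by fun_prop) (by fun_prop) fun ψ ↦ (f_denominator_neg k ψ).ne

variable {ψ : ℝ}

theorem sinCofactor_of_sin_eq_zero (hψ : sin ψ = 0) :
    sinCofactor k ψ = -(2 * k + 1) * cos ψ := by
  have cos_pow_eq_cos : cos ψ ^ (2 * k + 1) = cos ψ := by
    rw [pow_succ, pow_mul, cos_sq_eq_one_of_sin_eq_zero hψ, one_pow, one_mul]
  have cos_two_mul_eq_one : cos (2 * ψ) = 1 := by simp [cos_two_mul_eq_one_sub, hψ]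
  rw [sinCofactor, hψ, cos_pow_eq_cos, cos_two_mul_eq_one]
  ring

theorem hasDerivAt_f_of_sin_eq_zero (hψ : sin ψ = 0) :
    HasDerivAt (f k) (-(2 * k + 1)) ψ := by
  have slope_eq : cos ψ * sinCofactor k ψ = -(2 * k + 1) := by
    rw [sinCofactor_of_sin_eq_zero k hψ]
    linear_combination -(2 * (k : ℝ) + 1) * cos_sq_eq_one_of_sin_eq_zero hψ
  rw [f_eq_sin_mul_sinCofactor, ← slope_eq]
  exact hasDerivAt_mul_of_eq_zero (hasDerivAt_sin ψ) hψ (continuous_sinCofactor k).continuousAt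

end FastFoliation

/-- `f k` is differentiable at `0` and at `π` with derivative `-(2k+1)` at both
points; in particular both derivatives are strictly negative, so the equilibria
`ψ = 0` and `ψ = π` are hyperbolic and attracting for all `k`. -/
theorem deriv_at_fast_foliation_equilibria (k : ℕ) :
    HasDerivAt (f k) (-(2*(k:ℝ)+1)) 0 ∧ HasDerivAt (f k) (-(2*(k:ℝ)+1)) π ∧
      -(2*(k:ℝ)+1) < 0 :=
  ⟨hasDerivAt_f_of_sin_eq_zero k sin_zero, hasDerivAt_f_of_sin_eq_zero k sin_pi,
    neg_neg_of_pos (by positivity)⟩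
end

section
/- For every natural number k, the derivative of f_k at ψ*_k is strictly positive; that is, the unique interior equilibrium ψ*_k ∈ (π/2, π) of ψ̇ = f_k(ψ) on [0, π] is a hyperbolic repelling equilibrium (a source). -/
open Real

/-! At a zero of `cos ψ ^ (2k+1) + sin ψ`, differentiating `f k` only requires differentiating this
factor. Substituting `sin ψ = -cos ψ ^ (2k+1)` into the result, the numerator becomes a multiple of
`1 + 2k sin² ψ`, which is also minus the denominator. It cancels and leaves the derivative
`(2k+1) cos ψ ^ (2k)`, which is positive because `cos` and `sin` have no common zero. -/

theorem hasDerivAt_smul_of_continuousAt_of_eq_zero {𝕜 E : Type*} [NontriviallyNormedField 𝕜]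
    [NormedAddCommGroup E] [NormedSpace 𝕜 E] {a : 𝕜 → 𝕜} {g : 𝕜 → E} {g' : E} {x : 𝕜}
    (ha : ContinuousAt a x) (hg : HasDerivAt g g' x) (hx : g x = 0) :
    HasDerivAt (fun y ↦ a y • g y) (a x • g') x := by
  rw [hasDerivAt_iff_tendsto_slope] at hg ⊢
  have slope_eq : slope (fun y ↦ a y • g y) x = fun y ↦ a y • slope g x y := by
    ext y
    simp only [slope_def_module, hx, smul_zero, sub_zero, smul_comm (a y)]
  rw [slope_eq]
  exact (ha.tendsto.mono_left nhdsWithin_le_nhds).smul hg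

theorem mul_cos_two_mul_sub_sub_one (c ψ : ℝ) :
    c * cos (2 * ψ) - c - 1 = -(1 + 2 * c * sin ψ ^ 2) := by
  rw [cos_two_mul, cos_sq']
  ring

theorem f_apply_eq_smul (k : ℕ) (ψ : ℝ) :
    f k ψ = (-(2 * k + 1) * sin ψ / (1 + 2 * k * sin ψ ^ 2)) •
      (cos ψ ^ (2 * k + 1) + sin ψ) := by
  rw [f, mul_cos_two_mul_sub_sub_one, smul_eq_mul, div_neg]
  ring

theorem hasDerivAt_cos_pow_add_sin (m : ℕ) (ψ : ℝ) :
    HasDerivAt (fun θ ↦ cos θ ^ (m + 1) + sin θ) (cos ψ - (m + 1) * cos ψ ^ m * sin ψ) ψ := by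
  refine (((hasDerivAt_cos ψ).fun_pow (m + 1)).fun_add (hasDerivAt_sin ψ)).congr_deriv ?_
  push_cast [Nat.add_sub_cancel]
  ring

section Equilibrium

variable {ψ : ℝ}

theorem cos_ne_zero_of_cos_pow_add_sin_eq_zero {n : ℕ} (hn : n ≠ 0)
    (hψ : cos ψ ^ n + sin ψ = 0) : cos ψ ≠ 0 := by
  intro hcos
  have hsin : sin ψ = 0 := by simpa only [hcos, zero_pow hn, zero_add] using hψ
  simpa [hcos, hsin] using sin_sq_add_cos_sq ψ

theorem sin_mul_cos_sub_of_cos_pow_add_sin_eq_zero {m : ℕ}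
    (hψ : cos ψ ^ (m + 1) + sin ψ = 0) :
    sin ψ * (cos ψ - (m + 1) * cos ψ ^ m * sin ψ) = -(cos ψ ^ m * (1 + m * sin ψ ^ 2)) := by
  linear_combination cos ψ * hψ - cos ψ ^ m * sin_sq_add_cos_sq ψ

theorem hasDerivAt_f_of_cos_pow_add_sin_eq_zero {k : ℕ}
    (hψ : cos ψ ^ (2 * k + 1) + sin ψ = 0) :
    HasDerivAt (f k) ((2 * k + 1) * cos ψ ^ (2 * k)) ψ := by
  have hpos : 0 < 1 + 2 * k * sin ψ ^ 2 := by positivity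
  have hcont : ContinuousAt (fun θ ↦ -(2 * k + 1) * sin θ / (1 + 2 * k * sin θ ^ 2)) ψ :=
    ContinuousAt.div (by fun_prop) (by fun_prop) hpos.ne'
  have hsin := sin_mul_cos_sub_of_cos_pow_add_sin_eq_zero hψ
  rw [funext (f_apply_eq_smul k)]
  refine (hasDerivAt_smul_of_continuousAt_of_eq_zero hcont
    (hasDerivAt_cos_pow_add_sin (2 * k) ψ) hψ).congr_deriv ?_
  push_cast at hsin ⊢
  rw [smul_eq_mul, div_mul_eq_mul_div, div_eq_iff hpos.ne']
  linear_combination -(2 * k + 1) * hsin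

theorem interior_equilibrium_is_source_general {k : ℕ}
    (hψ : cos ψ ^ (2 * k + 1) + sin ψ = 0) : 0 < deriv (f k) ψ := by
  rw [(hasDerivAt_f_of_cos_pow_add_sin_eq_zero hψ).deriv]
  have hcos : cos ψ ≠ 0 := cos_ne_zero_of_cos_pow_add_sin_eq_zero (Nat.succ_ne_zero _) hψ
  have hpow : 0 < cos ψ ^ (2 * k) := (even_two_mul k).pow_pos hcos
  positivity

end Equilibrium

/-- The derivative of `f k` at the unique interior equilibrium
`ψ* ∈ (0, π)` (which lies in `(π/2, π)`) is strictly positive: `ψ*` is a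
hyperbolic repelling equilibrium (a source). -/
theorem interior_equilibrium_is_source (k : ℕ) (ψs : ℝ)
    (hψs : ψs ∈ Set.Ioo 0 π) (hzero : cos ψs ^ (2*k+1) + sin ψs = 0) :
    0 < deriv (f k) ψs :=
  interior_equilibrium_is_source_general hzero
end

section
/- Let Θ(θ, φ) = (1/16)·[sin(θ)·(6·cos(2θ) − 5·(cos(4θ) + 1))·sin³(φ) + 8·(cos(φ)/sin(φ))·(cos(θ) − 2·sin(θ))]. Then for θ₀ = arctan(1/2) and also for θ₀ = arctan(1/2) − π, one has Θ(θ₀, φ) = 0 for every φ ∈ (0, π); hence the meridians θ = θ₀ on the blow-up sphere are invariant, giving the singular canard connection between the attracting equilibrium at θ = arctan(1/2) − π and the repelling equilibrium at θ = arctan(1/2). -/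
/-!
The line `y = x / 2` consists of zeros of `X₀`, and `X₁ = (1, 1/2)` is tangent to it. After the
blow-up both contributions to the angular component therefore carry the factor
`cos θ - 2 * sin θ`: the `X₁` term visibly, the `X₀` term because
`5 * cos (2 * θ) - 3 = 2 * (cos θ - 2 * sin θ) * (cos θ + 2 * sin θ)`.
This factor vanishes when `tan θ = 1 / 2`.
-/

open Real

/-- The θ-component of the blown-up vector field on the sphere for the
degenerate transcritical example. -/
noncomputable def Θ (θ φ : ℝ) : ℝ :=
  (1/16) * (sin θ * (6 * cos (2*θ) - 5 * (cos (4*θ) + 1)) * sin φ ^ 3 +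
    8 * (cos φ / sin φ) * (cos θ - 2 * sin θ))

theorem five_mul_cos_two_mul_sub_three (θ : ℝ) :
    5 * cos (2 * θ) - 3 = 2 * (cos θ - 2 * sin θ) * (cos θ + 2 * sin θ) := by
  rw [cos_two_mul]
  linear_combination 8 * sin_sq_add_cos_sq θ

theorem Θ_eq_cos_sub_two_mul_sin_mul (θ φ : ℝ) :
    Θ θ φ = (cos θ - 2 * sin θ) *
      (2 * (cos φ / sin φ) - sin θ * cos (2 * θ) * (cos θ + 2 * sin θ) * sin φ ^ 3) / 4 := by
  have hcos_four : cos (4 * θ) = 2 * cos (2 * θ) ^ 2 - 1 := by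
    rw [← cos_two_mul, ← mul_assoc]
    norm_num
  rw [Θ, hcos_four]
  linear_combination
    (-1 / 8) * sin θ * cos (2 * θ) * sin φ ^ 3 * five_mul_cos_two_mul_sub_three θ

theorem Θ_eq_zero_of_tan_eq_half {θ : ℝ} (hθ : tan θ = 1 / 2) (φ : ℝ) : Θ θ φ = 0 := by
  have hcos : cos θ ≠ 0 := fun h => by norm_num [tan_eq_sin_div_cos, h] at hθ
  have hsin : 1 / 2 * cos θ = sin θ := hθ ▸ tan_mul_cos hcos
  have hfactor : cos θ - 2 * sin θ = 0 := by linarith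
  rw [Θ_eq_cos_sub_two_mul_sin_mul, hfactor, zero_mul, zero_div]

/-- The meridians `θ = arctan (1/2)` and `θ = arctan (1/2) - π` of the blow-up
sphere are invariant: `Θ` vanishes identically along them. This gives the
singular canard connection between the attracting equilibrium at
`arctan (1/2) - π` and the repelling equilibrium at `arctan (1/2)`. -/
theorem canard_meridians_transcritical :
    ∀ φ ∈ Set.Ioo (0:ℝ) π,
      Θ (arctan (1/2)) φ = 0 ∧ Θ (arctan (1/2) - π) φ = 0 := by
  intro φ _
  have htan : tan (arctan (1 / 2)) = 1 / 2 := tan_arctan _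
  have htan_sub_pi : tan (arctan (1 / 2) - π) = 1 / 2 := (tan_sub_pi _).trans htan
  exact ⟨Θ_eq_zero_of_tan_eq_half htan φ, Θ_eq_zero_of_tan_eq_half htan_sub_pi φ⟩
end

section
/- The set {θ ∈ (−π, π] : −3·sin²(2θ) + 8·sin(θ)·cos⁴(θ) + 4·sin²(θ)·cos²(θ) = 0} is exactly the six-element set {0, π, π/2, −π/2, arcsin(1/φ), π − arcsin(1/φ)}, where φ = (1 + √5)/2 is the golden ratio (so 1/φ = (√5 − 1)/2). -/
open Real

/-!
The double-angle formula turns the numerator into `8 sin θ cos² θ (1 - sin² θ - sin θ)`. The roots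
of `1 - s² - s` are `1/φ` and `-φ`, and the second is smaller than `-1`, so it is not a sine. Hence
the equilibria solve `sin θ = 0`, `cos θ = 0` or `sin θ = 1/φ`, and each of these equations has two
solutions in `(-π, π]`, because that interval contains every angle modulo `2π` exactly once.
-/

open scoped goldenRatio

theorem injOn_coe_angle_Ioc : Set.InjOn ((↑) : ℝ → Angle) (Set.Ioc (-π) π) := by
  intro θ hθ η hη h
  rw [← Angle.toReal_coe_eq_self_iff_mem_Ioc.2 hθ, h, Angle.toReal_coe_eq_self_iff_mem_Ioc.2 hη]

theorem sep_Ioc_sin_eq {s : ℝ} (hs : s ∈ Set.Icc 0 1) :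
    {θ ∈ Set.Ioc (-π) π | sin θ = s} = {arcsin s, π - arcsin s} := by
  have hsin : sin (arcsin s) = s := sin_arcsin (by linarith [hs.1]) hs.2
  have hnonneg : 0 ≤ arcsin s := arcsin_nonneg.2 hs.1
  have hle : arcsin s ≤ π / 2 := arcsin_le_pi_div_two s
  have hmem : arcsin s ∈ Set.Ioc (-π) π := ⟨by linarith [pi_pos], by linarith [pi_pos]⟩
  have hmem_sub : π - arcsin s ∈ Set.Ioc (-π) π := ⟨by linarith [pi_pos], by linarith⟩
  ext θ
  constructor
  · rintro ⟨hθ, h⟩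
    rcases Angle.sin_eq_iff_coe_eq_or_add_eq_pi.1 (h.trans hsin.symm) with h | h
    · exact .inl (injOn_coe_angle_Ioc hθ hmem h)
    · exact .inr (injOn_coe_angle_Ioc hθ hmem_sub (by rw [Angle.coe_sub, eq_sub_of_add_eq h]))
  · rintro (rfl | rfl)
    · exact ⟨hmem, hsin⟩
    · exact ⟨hmem_sub, by rw [sin_pi_sub, hsin]⟩

theorem sep_Ioc_cos_eq {c : ℝ} (hc : c ∈ Set.Ioc (-1) 1) :
    {θ ∈ Set.Ioc (-π) π | cos θ = c} = {arccos c, -arccos c} := by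
  have hcos : cos (arccos c) = c := cos_arccos hc.1.le hc.2
  have hnonneg : 0 ≤ arccos c := arccos_nonneg c
  have hlt : arccos c < π := arccos_lt_pi.2 hc.1
  have hmem : arccos c ∈ Set.Ioc (-π) π := ⟨by linarith, hlt.le⟩
  have hmem_neg : -arccos c ∈ Set.Ioc (-π) π := ⟨by linarith, by linarith⟩
  ext θ
  constructor
  · rintro ⟨hθ, h⟩
    rcases Angle.cos_eq_iff_coe_eq_or_eq_neg.1 (h.trans hcos.symm) with h | h
    · exact .inl (injOn_coe_angle_Ioc hθ hmem h)
    · exact .inr (injOn_coe_angle_Ioc hθ hmem_neg h)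
  · rintro (rfl | rfl)
    · exact ⟨hmem, hcos⟩
    · exact ⟨hmem_neg, by rw [cos_neg, hcos]⟩

theorem one_sub_sq_sub_self_eq_zero_iff {s : ℝ} : 1 - s ^ 2 - s = 0 ↔ s = 1 / φ ∨ s = -φ := by
  have hfactor : 1 - s ^ 2 - s = -((s - 1 / φ) * (s + φ)) := by
    rw [one_div, inv_goldenRatio]
    linear_combination s * goldenRatio_add_goldenConj + goldenRatio_mul_goldenConj
  rw [hfactor, neg_eq_zero, mul_eq_zero, sub_eq_zero, add_eq_zero_iff_eq_neg]

theorem one_sub_sin_sq_sub_sin_eq_zero_iff {θ : ℝ} :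
    1 - sin θ ^ 2 - sin θ = 0 ↔ sin θ = 1 / φ := by
  have hne : sin θ ≠ -φ := by linarith [neg_one_le_sin θ, one_lt_goldenRatio]
  rw [one_sub_sq_sub_self_eq_zero_iff, or_iff_left hne]

theorem equatorial_numerator_eq_mul (θ : ℝ) :
    -3 * sin (2 * θ) ^ 2 + 8 * sin θ * cos θ ^ 4 + 4 * sin θ ^ 2 * cos θ ^ 2 =
      8 * (sin θ * cos θ ^ 2 * (1 - sin θ ^ 2 - sin θ)) := by
  rw [sin_two_mul, ← cos_sq']
  ring

theorem equatorial_numerator_eq_zero_iff (θ : ℝ) :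
    -3 * sin (2 * θ) ^ 2 + 8 * sin θ * cos θ ^ 4 + 4 * sin θ ^ 2 * cos θ ^ 2 = 0 ↔
      (sin θ = 0 ∨ cos θ = 0) ∨ sin θ = 1 / φ := by
  rw [equatorial_numerator_eq_mul, mul_eq_zero_iff_left (by norm_num), mul_eq_zero, mul_eq_zero,
    sq_eq_zero_iff, one_sub_sin_sq_sub_sin_eq_zero_iff]

theorem one_div_goldenRatio_mem_Icc : 1 / φ ∈ Set.Icc 0 1 :=
  ⟨one_div_nonneg.2 goldenRatio_pos.le, (div_le_one goldenRatio_pos).2 one_lt_goldenRatio.le⟩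

/-- The equilibria on the equator of the blow-up sphere for the degenerate
pitchfork example: the zeros in `(-π, π]` of the numerator of the equatorial
dynamics are exactly `0, π, π/2, -π/2, arcsin (1/φ), π - arcsin (1/φ)`,
where `φ = (1 + √5)/2` is the golden ratio. -/
theorem equatorial_equilibria_pitchfork :
    {θ ∈ Set.Ioc (-π) π |
        -3 * sin (2*θ) ^ 2 + 8 * sin θ * cos θ ^ 4 + 4 * sin θ ^ 2 * cos θ ^ 2 = 0} =
      ({0, π, π/2, -(π/2), arcsin (1/((1 + Real.sqrt 5)/2)),
        π - arcsin (1/((1 + Real.sqrt 5)/2))} : Set ℝ) := by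
  have hsin_zero : {θ ∈ Set.Ioc (-π) π | sin θ = 0} = {0, π} := by
    rw [sep_Ioc_sin_eq (by simp), arcsin_zero, sub_zero]
  have hcos_zero : {θ ∈ Set.Ioc (-π) π | cos θ = 0} = {π / 2, -(π / 2)} := by
    rw [sep_Ioc_cos_eq (by simp), arccos_zero]
  simp only [equatorial_numerator_eq_zero_iff, Set.sep_or, hsin_zero, hcos_zero,
    sep_Ioc_sin_eq one_div_goldenRatio_mem_Icc, Set.insert_union, Set.singleton_union]
end
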